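/- arXiv:2202.07298 — 7 statements merged into one kernel-verified Lean document; each statement's English description precedes it below -/
import Mathlib

section
/- For all integers r ≥ 1 and m, k ≥ 0, one has (-1)^{r(r-1)/2} · det((C(k+i+j, m+r-1))_{i,j=0}^{r-1}) = ⟨k choose m⟩_r, i.e. the signed Hankel determinant of order r of the (m+r-1)-st column of Pascal's triangle, started at index k, equals the r-Hoggatt binomial coefficient. -/
/-- The `r`-Hoggatt binomial `⟨n choose k⟩_r = ∏_{j=0}^{r-1} C(n+j,k)/C(k+j,k)`, as a
rational number. -/
def hoggatt (r n k : ℕ) : ℚ :=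
  ∏ j ∈ Finset.range r, ((n + j).choose k : ℚ) / ((k + j).choose k : ℚ)

/-!
By Vandermonde's convolution, the Hankel matrix `C(k + i + j, m + r - 1)` is the matrix
`C(k + i, m + r - 1 - s)` times the unitriangular Pascal matrix. Reversing the columns of the former
produces the sign and the matrix `C(k + i, m + s)`. The identity
`C(n, m + s) C(m + s, m) = C(n, m) C(n - m, s)` extracts the factors of the Hoggatt binomial from
its rows and columns, leaving the matrix `C(k - m + i, s)`, whose determinant is `1` because
Pascal's rule makes it independent of the shift `k - m`.
-/

open Finset Matrix

theorem sign_revPerm (n : ℕ) :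
    Equiv.Perm.sign (Fin.revPerm : Equiv.Perm (Fin n)) = (-1) ^ (n * (n - 1) / 2) := by
  have prod_Iio (j : Fin n) :
      ∏ i ∈ Iio j, (if Fin.revPerm i < Fin.revPerm j then (1 : ℤˣ) else -1) = (-1) ^ j.1 := by
    rw [prod_congr rfl fun i hi => if_neg ?_, prod_const, Fin.card_Iio]
    simpa using (mem_Iio.1 hi).le
  rw [Equiv.Perm.sign_eq_prod_prod_Iio, prod_congr rfl fun j _ => prod_Iio j,
    prod_pow_eq_pow_sum, Fin.sum_univ_eq_sum_range (fun j => j), sum_range_id]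

theorem add_choose_eq_sum_range {i r N : ℕ} (hi : i < r) (hr : r ≤ N + 1) (n : ℕ) :
    (n + i).choose N = ∑ s ∈ range r, n.choose (N - s) * i.choose s := by
  calc (n + i).choose N
    _ = ∑ s ∈ range (N + 1), n.choose (N - s) * i.choose s := by
      rw [add_comm, Nat.add_choose_eq, Nat.sum_antidiagonal_eq_sum_range_succ_mk]
      exact sum_congr rfl fun s _ => mul_comm _ _
    _ = ∑ s ∈ range r, n.choose (N - s) * i.choose s := by
      refine (sum_subset (range_subset_range.2 hr) fun s _ hs => ?_).symm
      rw [Nat.choose_eq_zero_of_lt (hi.trans_le (by simpa using hs)), mul_zero]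

section Det

variable {R : Type*} [CommRing R] {r : ℕ}

theorem neg_one_pow_mul_det_submatrix_revPerm (M : Matrix (Fin r) (Fin r) R) :
    (-1) ^ (r * (r - 1) / 2) * (M.submatrix id Fin.revPerm).det = M.det := by
  rw [det_permute', sign_revPerm]
  push_cast
  rw [← mul_assoc, ← mul_pow, neg_one_mul, neg_neg, one_pow, one_mul]

theorem det_choose_val_val : (of fun i j : Fin r => (i.1.choose j.1 : R)).det = 1 := by
  rw [det_of_isLowerTriangular]
  · simp
  · intro i j (hij : i < j)
    rw [of_apply, Nat.choose_eq_zero_of_lt hij, Nat.cast_zero]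

theorem det_choose_add_one (x : Fin r → ℕ) :
    (of fun i j : Fin r => ((x i + 1).choose j.1 : R)).det =
      (of fun i j : Fin r => ((x i).choose j.1 : R)).det := by
  cases r with
  | zero => simp
  | succ r =>
    refine (det_eq_of_forall_col_eq_smul_add_pred (fun _ => -1) (by simp) fun i j => ?_).symm
    simp [Nat.choose_succ_succ]

theorem det_choose_add_const (x : Fin r → ℕ) (a : ℕ) :
    (of fun i j : Fin r => ((x i + a).choose j.1 : R)).det =
      (of fun i j : Fin r => ((x i).choose j.1 : R)).det := by
  induction a with
  | zero => rfl
  | succ a ih => exact (det_choose_add_one fun i => x i + a).trans ih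

theorem det_choose_add_val {N : ℕ} (hr : r ≤ N + 1) (x : Fin r → ℕ) :
    (of fun i j : Fin r => ((x i + j.1).choose N : R)).det =
      (of fun i j : Fin r => ((x i).choose (N - j.1) : R)).det := by
  have vandermonde_factorization :
      (of fun i j : Fin r => ((x i + j.1).choose N : R)) =
        (of fun i s : Fin r => ((x i).choose (N - s.1) : R)) *
          (of fun j s : Fin r => (j.1.choose s.1 : R))ᵀ := by
    ext i j
    simp only [mul_apply, transpose_apply, of_apply, add_choose_eq_sum_range j.2 hr, Nat.cast_sum,
      Nat.cast_mul, ← Fin.sum_univ_eq_sum_range]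
  rw [vandermonde_factorization, det_mul, det_transpose, det_choose_val_val, mul_one]

theorem neg_one_pow_mul_det_choose_add_val (m : ℕ) (x : Fin r → ℕ) :
    (-1) ^ (r * (r - 1) / 2) *
        (of fun i j : Fin r => ((x i + j.1).choose (m + r - 1) : R)).det =
      (of fun i j : Fin r => ((x i).choose (m + j.1) : R)).det := by
  have rev_columns : (of fun i j : Fin r => ((x i).choose (m + r - 1 - j.1) : R)) =
      (of fun i j : Fin r => ((x i).choose (m + j.1) : R)).submatrix id Fin.revPerm := by
    ext i j
    have sub_eq : m + r - 1 - j.1 = m + (Fin.rev j).1 := by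
      rw [Fin.val_rev]
      lia
    simp only [submatrix_apply, of_apply, id, Fin.revPerm_apply, sub_eq]
  rw [det_choose_add_val (by lia), rev_columns, neg_one_pow_mul_det_submatrix_revPerm]

theorem prod_choose_mul_det_choose_add (m : ℕ) (x : Fin r → ℕ) :
    (∏ j : Fin r, ((m + j.1).choose m : R)) *
        (of fun i j : Fin r => ((x i).choose (m + j.1) : R)).det =
      (∏ i, ((x i).choose m : R)) * (of fun i j : Fin r => ((x i - m).choose j.1 : R)).det := by
  rw [← det_mul_row, ← det_mul_column]
  congr 1
  ext i j
  have choose_mul := Nat.choose_mul (n := x i) (Nat.le_add_right m j.1)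
  rw [Nat.add_sub_cancel_left, mul_comm] at choose_mul
  simp only [of_apply]
  exact_mod_cast congrArg (Nat.cast : ℕ → R) choose_mul

theorem prod_choose_mul_det_choose_sub (m k : ℕ) :
    (∏ i : Fin r, ((k + i.1).choose m : R)) *
        (of fun i j : Fin r => ((k + i.1 - m).choose j.1 : R)).det =
      ∏ i : Fin r, ((k + i.1).choose m : R) := by
  obtain hmk | hkm := le_or_gt m k
  · have sub_eq (i : Fin r) : k + i.1 - m = i.1 + (k - m) := by lia
    simp only [sub_eq, det_choose_add_const, det_choose_val_val, mul_one]
  -- Here `k + i - m` truncates, but the factor `C(k, m)` kills both sides.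
  · cases r with
    | zero => simp
    | succ r => simp [Fin.prod_univ_succ, Nat.choose_eq_zero_of_lt hkm]

end Det

theorem det_choose_add_eq_hoggatt (r m k : ℕ) :
    (of fun i j : Fin r => ((k + i.1).choose (m + j.1) : ℚ)).det = hoggatt r k m := by
  have prod_ne_zero : ∏ j ∈ range r, ((m + j).choose m : ℚ) ≠ 0 :=
    prod_ne_zero_iff.2 fun j _ => Nat.cast_ne_zero.2 (Nat.choose_pos (Nat.le_add_right m j)).ne'
  have det_identity := (prod_choose_mul_det_choose_add (R := ℚ) m fun i : Fin r => k + i.1).trans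
    (prod_choose_mul_det_choose_sub m k)
  rw [Fin.prod_univ_eq_prod_range (fun j => ((m + j).choose m : ℚ)),
    Fin.prod_univ_eq_prod_range (fun j => ((k + j).choose m : ℚ))] at det_identity
  rw [hoggatt, prod_div_distrib, eq_div_iff prod_ne_zero, mul_comm, det_identity]

/-- For `r ≥ 1` and `m, k ≥ 0`, the signed `r × r` Hankel determinant of the `(m+r-1)`-st
column of Pascal's triangle, started at index `k`, equals the `r`-Hoggatt binomial
`⟨k choose m⟩_r`. -/
theorem signed_hankel_det_pascal_column_eq_hoggatt (r m k : ℕ) (hr : 1 ≤ r) :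
    (-1 : ℚ) ^ (r * (r - 1) / 2) *
      (Matrix.of fun i j : Fin r => ((k + i.1 + j.1).choose (m + r - 1) : ℚ)).det =
    hoggatt r k m :=
  (neg_one_pow_mul_det_choose_add_val m fun i => k + i.1).trans (det_choose_add_eq_hoggatt r m k)
end

section
/- For all integers r ≥ 1 and m ≥ r-1, there exists a polynomial A with nonnegative integer coefficients of degree at most (r-1)(m-r) such that, as formal power series over ℚ, (1-x)^{r(m-r+1)+1} · ∑_{k≥0} d_k(m, r) x^k = (-1)^{r(r-1)/2} · x^{m-r+1} · A(x). -/
/-- The Hankel determinant `d_k(m, r) = det((C(k+i+j, m))_{i,j=0}^{r-1})`, taken over `ℚ`. -/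
def hankelPascal (k m r : ℕ) : ℚ :=
  (Matrix.of fun i j : Fin r => ((k + i.1 + j.1).choose m : ℚ)).det

/-!
Put `r = s + 1` and `m = n + s`. Vandermonde's convolution and a Vandermonde determinant give,
with `c > 0` independent of `k`,
`(-1)^{r(r-1)/2} d_k(m, r) = c ∏_{i ≤ s} ∏_{l < n} (k + i - l)`.

The generating function of a product of linear factors in `k` is built one factor at a time. If
`∑ f(k) x^k = h(x) / (1-x)^{N+1}`, then `∑ (k + c) f(k) x^k = p(x) / (1-x)^{N+2}` with
`p_j = (j + c) h_j + (N + 2 - c - j) h_{j-1}`. So when `h` is nonnegative and supported on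
`[a, d]`, every factor with `-a ≤ c ≤ N + 1 - d` keeps nonnegativity, and the two extreme choices
of `c` make one of the end coefficients of `p` vanish. Multiplying first by the factors `k - l`,
then by the `k + i`, and only then by the remaining ones, each `c` is admissible when its turn
comes.
-/

open PowerSeries Finset Matrix
open scoped Nat

section Numerator

variable {R : Type*} [CommRing R]

/-- The numerator of the generating function `∑ f(k) x^k` over the denominator `(1-x)^{N+1}`; it is
the `h*`-polynomial of `f` when `f` is a polynomial function of degree at most `N`. -/
noncomputable def genFunNumerator (N : ℕ) (f : ℕ → R) : R⟦X⟧ :=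
  (1 - X) ^ (N + 1) * PowerSeries.mk f

lemma genFunNumerator_const_mul (N : ℕ) (c : R) (f : ℕ → R) :
    genFunNumerator N (fun k => c * f k) = C c * genFunNumerator N f := by
  have mk_const_mul : PowerSeries.mk (fun k => c * f k) = C c * PowerSeries.mk f := by
    ext k
    simp only [coeff_mk, coeff_C_mul]
  rw [genFunNumerator, genFunNumerator, mk_const_mul, mul_left_comm]

lemma map_genFunNumerator {S : Type*} [CommRing S] (g : R →+* S) (N : ℕ) (f : ℕ → R) :
    PowerSeries.map g (genFunNumerator N f) = genFunNumerator N (fun k => g (f k)) := by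
  have map_mk : PowerSeries.map g (PowerSeries.mk f) = PowerSeries.mk fun k => g (f k) := by
    ext k
    simp only [coeff_map, coeff_mk]
  simp only [genFunNumerator, map_mul, map_pow, map_sub, map_one, map_X, map_mk]

lemma genFunNumerator_zero_one : genFunNumerator 0 (fun _ => (1 : R)) = 1 := by
  rw [genFunNumerator, zero_add, pow_one, mul_comm]
  exact mk_one_mul_one_sub_eq_one R

lemma coeff_X_mul_derivative (P : R⟦X⟧) (j : ℕ) :
    coeff j (X * d⁄dX R P) = j * coeff j P := by
  cases j with
  | zero => simp
  | succ j => rw [coeff_succ_X_mul, coeff_derivative, Nat.cast_succ, mul_comm]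

lemma mk_natCast_add_mul (c : R) (f : ℕ → R) :
    PowerSeries.mk (fun k => (k + c) * f k) =
      X * d⁄dX R (PowerSeries.mk f) + C c * PowerSeries.mk f := by
  ext j
  rw [map_add, coeff_X_mul_derivative, coeff_C_mul, coeff_mk, coeff_mk, add_mul]

lemma genFunNumerator_natCast_add_mul (N : ℕ) (c : R) (f : ℕ → R) :
    genFunNumerator (N + 1) (fun k => (k + c) * f k) =
      X * d⁄dX R (genFunNumerator N f) + C c * genFunNumerator N f +
        X * (C (N + 1 - c) * genFunNumerator N f - X * d⁄dX R (genFunNumerator N f)) := by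
  have derivative_numerator : d⁄dX R (genFunNumerator N f) =
      (1 - X) ^ (N + 1) * d⁄dX R (PowerSeries.mk f) -
        ((N : R⟦X⟧) + 1) * (1 - X) ^ N * PowerSeries.mk f := by
    rw [genFunNumerator, Derivation.leibniz, derivative_pow, map_sub, derivative_one, derivative_X]
    simp only [smul_eq_mul, Nat.add_sub_cancel, Nat.cast_add, Nat.cast_one]
    ring
  have C_weight : C ((N : R) + 1 - c) = (N : R⟦X⟧) + 1 - C c := by simp
  rw [derivative_numerator, C_weight, genFunNumerator, genFunNumerator, mk_natCast_add_mul]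
  ring

lemma coeff_zero_genFunNumerator_natCast_add_mul (N : ℕ) (c : R) (f : ℕ → R) :
    coeff 0 (genFunNumerator (N + 1) (fun k => (k + c) * f k)) =
      c * coeff 0 (genFunNumerator N f) := by
  rw [genFunNumerator_natCast_add_mul, map_add, map_add, coeff_zero_X_mul, coeff_zero_X_mul,
    coeff_C_mul, zero_add, add_zero]

lemma coeff_succ_genFunNumerator_natCast_add_mul (N : ℕ) (c : R) (f : ℕ → R) (j : ℕ) :
    coeff (j + 1) (genFunNumerator (N + 1) (fun k => (k + c) * f k)) =
      ((j + 1 : ℕ) + c) * coeff (j + 1) (genFunNumerator N f) +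
        (N + 1 - c - j) * coeff j (genFunNumerator N f) := by
  rw [genFunNumerator_natCast_add_mul, map_add, map_add, coeff_X_mul_derivative, coeff_C_mul,
    coeff_succ_X_mul, map_sub, coeff_X_mul_derivative, coeff_C_mul]
  ring

end Numerator

lemma prod_range_succ_prod_range_succ {M : Type*} [CommMonoid M] (s n : ℕ) (g : ℕ → ℕ → M) :
    ∏ i ∈ range (s + 1), ∏ l ∈ range (n + 1), g i l =
      (∏ i ∈ range s, ∏ l ∈ range n, g (i + 1) (l + 1)) *
        ((∏ i ∈ range s, g (i + 1) 0) * ∏ l ∈ range (n + 1), g 0 l) := by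
  simp only [prod_range_succ' _ s, prod_range_succ' (g (_ + 1)) n, prod_mul_distrib, mul_assoc]

/-- The coefficients of `P` are nonnegative and vanish outside the degrees `a, …, d`. -/
structure IsNonnegOn {R : Type*} [Semiring R] [PartialOrder R] (a d : ℕ) (P : R⟦X⟧) : Prop where
  coeff_nonneg : ∀ j, 0 ≤ coeff j P
  coeff_eq_zero_of_lt : ∀ j < a, coeff j P = 0
  coeff_eq_zero_of_gt : ∀ j > d, coeff j P = 0

namespace IsNonnegOn

section OrderedRing

variable {R : Type*} [CommRing R] [PartialOrder R] [IsOrderedRing R]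
  {a d N : ℕ} {f : ℕ → R} {P : R⟦X⟧}

lemma one : IsNonnegOn 0 0 (1 : R⟦X⟧) where
  coeff_nonneg j := by
    rw [coeff_one]
    split_ifs
    exacts [zero_le_one, le_rfl]
  coeff_eq_zero_of_lt j hj := absurd hj j.not_lt_zero
  coeff_eq_zero_of_gt j hj := by rw [coeff_one, if_neg hj.ne']

lemma C_mul {c : R} (hc : 0 ≤ c) (h : IsNonnegOn a d P) : IsNonnegOn a d (C c * P) where
  coeff_nonneg j := by
    rw [coeff_C_mul]
    exact mul_nonneg hc (h.coeff_nonneg j)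
  coeff_eq_zero_of_lt j hj := by rw [coeff_C_mul, h.coeff_eq_zero_of_lt j hj, mul_zero]
  coeff_eq_zero_of_gt j hj := by rw [coeff_C_mul, h.coeff_eq_zero_of_gt j hj, mul_zero]

lemma natCast_add_mul_coeff_nonneg (h : IsNonnegOn a d P) {c : ℤ} (hac : 0 ≤ a + c) (j : ℕ) :
    0 ≤ ((j : R) + c) * coeff j P := by
  rcases lt_or_ge j a with hj | hj
  · rw [h.coeff_eq_zero_of_lt j hj, mul_zero]
  · have factor_nonneg : (0 : ℤ) ≤ j + c := by omega
    exact mul_nonneg (mod_cast Int.cast_nonneg (R := R) factor_nonneg) (h.coeff_nonneg j)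

lemma sub_natCast_mul_coeff_nonneg (h : IsNonnegOn a d P) {c : ℤ} (hdc : d + c ≤ N + 1) (j : ℕ) :
    0 ≤ ((N : R) + 1 - c - j) * coeff j P := by
  rcases lt_or_ge d j with hj | hj
  · rw [h.coeff_eq_zero_of_gt j hj, mul_zero]
  · have factor_nonneg : (0 : ℤ) ≤ N + 1 - c - j := by omega
    exact mul_nonneg (mod_cast Int.cast_nonneg (R := R) factor_nonneg) (h.coeff_nonneg j)

lemma natCast_add_mul (h : IsNonnegOn a d (genFunNumerator N f)) {c : ℤ}
    (hac : 0 ≤ a + c) (hdc : d + c ≤ N + 1) :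
    IsNonnegOn a (d + 1) (genFunNumerator (N + 1) fun k => ((k : R) + c) * f k) where
  coeff_nonneg
    | 0 => by
      rw [coeff_zero_genFunNumerator_natCast_add_mul]
      simpa using h.natCast_add_mul_coeff_nonneg hac 0
    | j + 1 => by
      rw [coeff_succ_genFunNumerator_natCast_add_mul]
      exact add_nonneg (h.natCast_add_mul_coeff_nonneg hac (j + 1))
        (h.sub_natCast_mul_coeff_nonneg hdc j)
  coeff_eq_zero_of_lt
    | 0, hj => by
      rw [coeff_zero_genFunNumerator_natCast_add_mul, h.coeff_eq_zero_of_lt 0 hj, mul_zero]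
    | j + 1, hj => by
      rw [coeff_succ_genFunNumerator_natCast_add_mul, h.coeff_eq_zero_of_lt (j + 1) hj,
        h.coeff_eq_zero_of_lt j (by omega), mul_zero, mul_zero, add_zero]
  coeff_eq_zero_of_gt
    | j + 1, hj => by
      rw [coeff_succ_genFunNumerator_natCast_add_mul, h.coeff_eq_zero_of_gt (j + 1) (by omega),
        h.coeff_eq_zero_of_gt j (by omega), mul_zero, mul_zero, add_zero]

lemma natCast_add_mul_of_left (h : IsNonnegOn a d (genFunNumerator N f)) {c : ℤ}
    (hac : a + c = 0) (hdc : d + c ≤ N + 1) :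
    IsNonnegOn (a + 1) (d + 1) (genFunNumerator (N + 1) fun k => ((k : R) + c) * f k) where
  __ := h.natCast_add_mul hac.ge hdc
  coeff_eq_zero_of_lt j hj := by
    rcases (Nat.lt_succ_iff.mp hj).lt_or_eq with hlt | rfl
    · exact (h.natCast_add_mul hac.ge hdc).coeff_eq_zero_of_lt j hlt
    · have factor_eq_zero : (j : R) + c = 0 := mod_cast congrArg (Int.cast (R := R)) hac
      cases j with
      | zero =>
        rw [Nat.cast_zero, zero_add] at factor_eq_zero
        rw [coeff_zero_genFunNumerator_natCast_add_mul, factor_eq_zero, zero_mul]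
      | succ j =>
        rw [coeff_succ_genFunNumerator_natCast_add_mul, factor_eq_zero, zero_mul,
          h.coeff_eq_zero_of_lt j j.lt_succ_self, mul_zero, add_zero]

lemma natCast_add_mul_of_right (h : IsNonnegOn a d (genFunNumerator N f)) {c : ℤ}
    (hac : 0 ≤ a + c) (hdc : d + c = N + 1) :
    IsNonnegOn a d (genFunNumerator (N + 1) fun k => ((k : R) + c) * f k) where
  __ := h.natCast_add_mul hac hdc.le
  coeff_eq_zero_of_gt j hj := by
    rcases (Nat.succ_le_iff.mpr hj).lt_or_eq with hlt | rfl
    · exact (h.natCast_add_mul hac hdc.le).coeff_eq_zero_of_gt j hlt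
    · have factor_eq_zero : (N : R) + 1 - c - d = 0 := by
        have cast_hdc : (d : R) + c = N + 1 := mod_cast congrArg (Int.cast (R := R)) hdc
        rw [← cast_hdc]
        ring
      rw [Nat.succ_eq_add_one, coeff_succ_genFunNumerator_natCast_add_mul, factor_eq_zero,
        zero_mul, h.coeff_eq_zero_of_gt (d + 1) d.lt_succ_self, mul_zero, add_zero]

lemma prod_natCast_add_mul (h : IsNonnegOn a d (genFunNumerator N f)) {ι : Type*} (s : Finset ι)
    (c : ι → ℤ) (hac : ∀ i ∈ s, 0 ≤ a + c i) (hdc : ∀ i ∈ s, d + c i ≤ N + 1) :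
    IsNonnegOn a (d + #s)
      (genFunNumerator (N + #s) fun k => (∏ i ∈ s, ((k : R) + c i)) * f k) := by
  classical
  induction s using Finset.induction_on with
  | empty => simpa using h
  | insert x s hx ih =>
    rw [forall_mem_insert] at hac hdc
    have step := (ih hac.2 hdc.2).natCast_add_mul hac.1 (by push_cast; linarith [hdc.1])
    simpa only [card_insert_of_notMem hx, prod_insert hx, ← add_assoc, mul_assoc] using step

lemma prod_natCast_sub (n : ℕ) :
    IsNonnegOn n n (genFunNumerator n fun k => ∏ l ∈ range n, ((k : R) - l)) := by
  induction n with
  | zero => simpa only [range_zero, prod_empty, genFunNumerator_zero_one] using one (R := R)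
  | succ n ih =>
    have step := ih.natCast_add_mul_of_left (c := -n) (by omega) (by omega)
    simpa only [prod_range_succ, mul_comm, Int.cast_neg, Int.cast_natCast, ← sub_eq_add_neg]
      using step

lemma prod_natCast_add_succ_mul (h : IsNonnegOn a d (genFunNumerator d f)) (s : ℕ) :
    IsNonnegOn a d
      (genFunNumerator (d + s) fun k => (∏ i ∈ range s, ((k : R) + (i + 1))) * f k) := by
  induction s with
  | zero => simpa using h
  | succ s ih =>
    have step := ih.natCast_add_mul_of_right (c := s + 1) (by omega) (by push_cast; ring)
    simpa only [prod_range_succ_comm, ← add_assoc, mul_assoc, Int.cast_add, Int.cast_natCast,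
      Int.cast_one] using step

lemma prod_prod_natCast_add_sub (s n : ℕ) :
    IsNonnegOn n (n + s * (n - 1)) (genFunNumerator ((s + 1) * n) fun k =>
      ∏ i ∈ range (s + 1), ∏ l ∈ range n, ((k : R) + i - l)) := by
  cases n with
  | zero => simpa [genFunNumerator_zero_one] using one (R := R)
  | succ n =>
    have firstRow := prod_natCast_sub (R := R) (n + 1)
    have firstRowAndColumn := firstRow.prod_natCast_add_succ_mul s
    have grid := firstRowAndColumn.prod_natCast_add_mul (range s ×ˢ range n)
      (fun p => (p.1 : ℤ) - p.2)
      (fun p hp => by simp only [mem_product, mem_range] at hp; omega)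
      (fun p hp => by simp only [mem_product, mem_range] at hp; omega)
    have exponent : n + 1 + s + s * n = (s + 1) * (n + 1) := by ring
    rw [card_product, card_range, card_range, exponent] at grid
    convert grid using 2
    · rw [Nat.add_sub_cancel]
    · ext k
      rw [prod_range_succ_prod_range_succ, prod_product]
      push_cast
      simp only [← add_assoc, ← add_sub_assoc, add_sub_add_right_eq_sub, add_zero, sub_zero]

end OrderedRing

lemma of_C_mul {R : Type*} [CommRing R] [LinearOrder R] [IsStrictOrderedRing R] {a d : ℕ}
    {P : R⟦X⟧} {c : R} (hc : 0 < c) (h : IsNonnegOn a d (C c * P)) : IsNonnegOn a d P where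
  coeff_nonneg j := nonneg_of_mul_nonneg_right (by simpa using h.coeff_nonneg j) hc
  coeff_eq_zero_of_lt j hj := by simpa [hc.ne'] using h.coeff_eq_zero_of_lt j hj
  coeff_eq_zero_of_gt j hj := by simpa [hc.ne'] using h.coeff_eq_zero_of_gt j hj

lemma exists_polynomial {a d : ℕ} {P : ℤ⟦X⟧} (h : IsNonnegOn a d P)
    (S : Type*) [Ring S] :
    ∃ A : Polynomial ℕ, A.natDegree ≤ d - a ∧
      PowerSeries.map (Int.castRingHom S) P = X ^ a * (A.map (Nat.castRingHom S) : S⟦X⟧) := by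
  refine ⟨trunc (d - a + 1) (PowerSeries.mk fun j => (coeff (j + a) P).toNat),
    Nat.lt_succ_iff.mp (natDegree_trunc_lt _ _), ?_⟩
  ext j
  rw [coeff_map, coeff_X_pow_mul', Polynomial.coeff_coe, Polynomial.coeff_map, coeff_trunc,
    coeff_mk, eq_intCast, eq_natCast]
  split_ifs with ha hd
  · rw [Nat.sub_add_cancel ha, ← Int.cast_natCast, Int.toNat_of_nonneg (h.coeff_nonneg j)]
  · rw [h.coeff_eq_zero_of_gt j (by omega), Int.cast_zero, Nat.cast_zero]
  · rw [h.coeff_eq_zero_of_lt j (by omega), Int.cast_zero]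

end IsNonnegOn

section Determinant

variable {R : Type*} [CommRing R]

lemma sign_fin_revPerm (r : ℕ) :
    Equiv.Perm.sign (Fin.revPerm : Equiv.Perm (Fin r)) = (-1) ^ (r * (r - 1) / 2) := by
  have inverted : ∀ i : Fin r, ∀ j ∈ Ioi i,
      (if Fin.revPerm i < Fin.revPerm j then (1 : ℤˣ) else -1) = -1 := fun i j hj => by
    simp [(mem_Ioi.mp hj).le]
  rw [Equiv.Perm.sign_eq_prod_prod_Ioi, prod_congr rfl fun i _ => prod_congr rfl (inverted i)]
  simp only [prod_const, Fin.card_Ioi]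
  rw [prod_pow_eq_pow_sum, Fin.sum_univ_eq_sum_range (fun i => r - 1 - i) r,
    sum_range_reflect (fun i => i) r, sum_range_id]

lemma choose_add_eq_sum_fin (n s a j : ℕ) (hj : j ≤ s) :
    (a + j).choose (n + s) = ∑ l : Fin (s + 1), a.choose (n + s - l) * j.choose l := by
  rw [add_comm a j, Nat.add_choose_eq, Finset.Nat.sum_antidiagonal_eq_sum_range_succ_mk,
    Fin.sum_univ_eq_sum_range (fun l => a.choose (n + s - l) * j.choose l)]
  simp only [mul_comm (j.choose _)]
  refine (sum_subset (range_subset_range.mpr (by omega)) fun l _ hl => ?_).symm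
  rw [Nat.choose_eq_zero_of_lt (n := j) (by rw [mem_range] at hl; omega), mul_zero]

lemma det_choose_eq_one (r : ℕ) :
    (Matrix.of fun l j : Fin r => ((j : ℕ).choose l : R)).det = 1 := by
  have upperTriangular : (Matrix.of fun l j : Fin r => ((j : ℕ).choose l : R)).IsUpperTriangular :=
    fun l j hlj => by simp [Nat.choose_eq_zero_of_lt (show (j : ℕ) < l from hlj)]
  simp [det_of_isUpperTriangular upperTriangular]

lemma det_choose_add_eq_det_choose_sub (n s : ℕ) (x : Fin (s + 1) → ℕ) :
    (Matrix.of fun i j : Fin (s + 1) => ((x i + j).choose (n + s) : R)).det =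
      (Matrix.of fun i l : Fin (s + 1) => ((x i).choose (n + s - l) : R)).det := by
  have factorization : (Matrix.of fun i j : Fin (s + 1) => ((x i + j).choose (n + s) : R)) =
      (Matrix.of fun i l : Fin (s + 1) => ((x i).choose (n + s - l) : R)) *
        Matrix.of fun l j : Fin (s + 1) => ((j : ℕ).choose l : R) := by
    ext i j
    simp only [mul_apply, of_apply, choose_add_eq_sum_fin n s (x i) j j.is_le, Nat.cast_sum,
      Nat.cast_mul]
  rw [factorization, det_mul, det_choose_eq_one, mul_one]

lemma det_choose_sub_eq_sign_mul (n s : ℕ) (x : Fin (s + 1) → ℕ) :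
    (Matrix.of fun i l : Fin (s + 1) => ((x i).choose (n + s - l) : R)).det =
      (-1) ^ ((s + 1) * s / 2) *
        (Matrix.of fun i l : Fin (s + 1) => ((x i).choose (n + l) : R)).det := by
  have reversed : (Matrix.of fun i l : Fin (s + 1) => ((x i).choose (n + s - l) : R)) =
      (Matrix.of fun i l : Fin (s + 1) => ((x i).choose (n + l) : R)).submatrix id Fin.revPerm := by
    ext i l
    have index : n + s - (l : ℕ) = n + (s + 1 - (l + 1)) := by omega
    simp [index]
  rw [reversed, det_permute', sign_fin_revPerm]
  simp

lemma factorial_mul_choose_add (n l a : ℕ) :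
    ((n + l)! : R) * (a.choose (n + l) : R) =
      (descPochhammer R n).eval (a : R) * (descPochhammer R l).eval ((a : R) - n) := by
  calc ((n + l)! : R) * (a.choose (n + l) : R)
      = (descPochhammer R (n + l)).eval (a : R) := by
        rw [descPochhammer_eval_eq_descFactorial, Nat.descFactorial_eq_factorial_mul_choose,
          Nat.cast_mul]
    _ = _ := by simp [← descPochhammer_mul, Polynomial.eval_comp]

lemma prod_factorial_mul_det_choose_add [IsDomain R] (n r : ℕ) (x : Fin r → ℕ) :
    (∏ l : Fin r, ((n + l)! : R)) * (Matrix.of fun i l : Fin r => ((x i).choose (n + l) : R)).det =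
      (∏ i, (descPochhammer R n).eval (x i : R)) * (vandermonde fun i => (x i : R)).det := by
  rw [← det_mul_row, ← det_vandermonde_sub _ (n : R),
    det_eval_matrixOfPolynomials_eq_det_vandermonde _ (fun l : Fin r => descPochhammer R l)
      (fun l => descPochhammer_natDegree R l) (fun l => monic_descPochhammer R l),
    ← det_mul_column]
  congr 1
  ext i l
  exact factorial_mul_choose_add n l (x i)

end Determinant

/-- The integer `(-1)^{r(r-1)/2} d_k(m, r)`, whose generating function has a nonnegative
numerator. -/
def signedHankelPascal (k m r : ℕ) : ℤ :=
  (-1) ^ (r * (r - 1) / 2) *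
    (Matrix.of fun i j : Fin r => ((k + i.1 + j.1).choose m : ℤ)).det

lemma hankelPascal_eq_neg_one_pow_mul (k m r : ℕ) :
    hankelPascal k m r = (-1) ^ (r * (r - 1) / 2) * (signedHankelPascal k m r : ℚ) := by
  have cast_det : hankelPascal k m r =
      ((Matrix.of fun i j : Fin r => ((k + i.1 + j.1).choose m : ℤ)).det : ℚ) := by
    rw [Int.cast_det]
    rfl
  rw [cast_det, signedHankelPascal, Int.cast_mul, ← mul_assoc]
  simp [← mul_pow]

lemma prod_factorial_mul_signedHankelPascal (k n s : ℕ) :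
    (∏ l : Fin (s + 1), ((n + l)! : ℤ)) * signedHankelPascal k (n + s) (s + 1) =
      s.superFactorial * ∏ i ∈ range (s + 1), ∏ l ∈ range n, ((k : ℤ) + i - l) := by
  have sign_sq : ((-1 : ℤ) ^ ((s + 1) * s / 2)) * (-1) ^ ((s + 1) * s / 2) = 1 := by
    simp [← mul_pow]
  have vandermonde_eq : (vandermonde fun i : Fin (s + 1) => ((k + i : ℕ) : ℤ)).det =
      s.superFactorial := by
    simp only [Nat.cast_add, add_comm (k : ℤ), det_vandermonde_add,
      det_vandermonde_id_eq_superFactorial]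
  rw [signedHankelPascal, det_choose_add_eq_det_choose_sub n s fun i => k + i,
    det_choose_sub_eq_sign_mul, Nat.add_sub_cancel, ← mul_assoc (_ ^ _), sign_sq, one_mul,
    prod_factorial_mul_det_choose_add, vandermonde_eq, mul_comm]
  simp only [descPochhammer_eval_eq_prod_range, Nat.cast_add,
    Fin.prod_univ_eq_prod_range (fun i => ∏ l ∈ range n, ((k : ℤ) + i - l)) (s + 1)]

lemma isNonnegOn_genFunNumerator_signedHankelPascal (n s : ℕ) :
    IsNonnegOn n (n + s * (n - 1))
      (genFunNumerator ((s + 1) * n) fun k => signedHankelPascal k (n + s) (s + 1)) := by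
  have factorials_pos : 0 < ∏ l : Fin (s + 1), ((n + l)! : ℤ) :=
    prod_pos fun l _ => mod_cast Nat.factorial_pos _
  refine IsNonnegOn.of_C_mul factorials_pos ?_
  simp only [← genFunNumerator_const_mul, prod_factorial_mul_signedHankelPascal]
  rw [genFunNumerator_const_mul]
  exact (IsNonnegOn.prod_prod_natCast_add_sub s n).C_mul (Nat.cast_nonneg _)

/-- For `r ≥ 1` and `m ≥ r - 1`, there is a polynomial `A` with nonnegative integer
coefficients, of degree at most `(r-1)(m-r)`, such that
`(1-x)^{r(m-r+1)+1} ∑_{k≥0} d_k(m,r) x^k = (-1)^{r(r-1)/2} x^{m-r+1} A(x)`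
as formal power series over `ℚ`. -/
theorem genFun_hankel_det_pascal_column (r m : ℕ) (hr : 1 ≤ r) (hm : r - 1 ≤ m) :
    ∃ A : Polynomial ℕ, A.natDegree ≤ (r - 1) * (m - r) ∧
      (1 - PowerSeries.X) ^ (r * (m + 1 - r) + 1) *
          PowerSeries.mk (fun k => hankelPascal k m r) =
        (-1 : PowerSeries ℚ) ^ (r * (r - 1) / 2) * PowerSeries.X ^ (m + 1 - r) *
          ((A.map (Nat.castRingHom ℚ)) : PowerSeries ℚ) := by
  obtain ⟨s, rfl⟩ : ∃ s, r = s + 1 := ⟨r - 1, by omega⟩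
  obtain ⟨n, rfl⟩ : ∃ n, m = n + s := ⟨m - s, by omega⟩
  have m_add_one_sub_r : n + s + 1 - (s + 1) = n := by omega
  have m_sub_r : n + s - (s + 1) = n - 1 := by omega
  obtain ⟨A, natDegree_le, numerator_eq⟩ :=
    (isNonnegOn_genFunNumerator_signedHankelPascal n s).exists_polynomial ℚ
  refine ⟨A, by simpa [m_sub_r] using natDegree_le, ?_⟩
  simp only [hankelPascal_eq_neg_one_pow_mul]
  rw [m_add_one_sub_r, mul_assoc, ← numerator_eq, map_genFunNumerator, ← genFunNumerator,
    genFunNumerator_const_mul]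
  simp
end

section
/- For all integers r ≥ 1 and s ≥ 1, if A is the polynomial over ℚ such that, as formal power series, (1-x)^{rs+1} · ∑_{k≥0} ⟨k+s choose s⟩_r x^k = A(x), then A(1) equals the r-dimensional Catalan number C_{r,s} = (rs)! · ∏_{j=0}^{r-1} j!/(s+j)!. -/
/-!
If `k ↦ p(k)` interpolates the coefficients of `A(x) / (1 - x) ^ (d + 1)`, then `p` is a linear
combination, with the coefficients of `A` as weights, of polynomials of degree `d` and leading
coefficient `1 / d!` (the Hilbert polynomials of the monomials). Hence `A(1) = d! [X ^ d] p`.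
For the Hoggatt binomials `p` is an explicit product of `r` polynomials of degree `s`, so
`[X ^ (r * s)] p` is the product of their leading coefficients.
-/

section HilbertPoly

open Polynomial PowerSeries

variable {F : Type*} [Field F] [CharZero F]

lemma coeff_taylor_preHilbertPoly_self (a : F) (d k : ℕ) :
    (taylor a (preHilbertPoly F d k)).coeff d = (d.factorial : F)⁻¹ := by
  rw [← leadingCoeff_preHilbertPoly F d k, ← coeff_taylor_natDegree a, natDegree_preHilbertPoly]

lemma coeff_hilbertPoly_succ_self (p : F[X]) (d : ℕ) :
    (hilbertPoly p (d + 1)).coeff d = p.eval 1 / (d.factorial : F) := by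
  simp only [hilbertPoly_succ, finsetSum_coeff, Polynomial.coeff_smul, coeff_preHilbertPoly_self,
    smul_eq_mul, eval_eq_sum, Polynomial.sum_def, one_pow, mul_one, ← Finset.sum_mul,
    div_eq_mul_inv]

lemma eq_hilbertPoly_of_one_sub_X_pow_mul_mk_eval_eq {p A : F[X]} {d : ℕ}
    (h : (1 - PowerSeries.X) ^ d * PowerSeries.mk (fun k ↦ p.eval (k : F)) = (A : F⟦X⟧)) :
    p = hilbertPoly A d := by
  have coe_mul_invOneSubPow :
      (A : F⟦X⟧) * invOneSubPow F d = PowerSeries.mk fun k ↦ p.eval (k : F) := by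
    rw [← Units.eq_mul_inv_iff_mul_eq, ← Units.inv_eq_val_inv, invOneSubPow_inv_eq_one_sub_pow,
      mul_comm, h]
  refine eq_hilbertPoly_of_forall_coeff_eq_eval 0 fun n _ ↦ ?_
  rw [coe_mul_invOneSubPow, PowerSeries.coeff_mk]

lemma eval_one_eq_factorial_mul_coeff_of_one_sub_X_pow_mul_mk_eval_eq {p A : F[X]} {d : ℕ}
    (h : (1 - PowerSeries.X) ^ (d + 1) * PowerSeries.mk (fun k ↦ p.eval (k : F)) = (A : F⟦X⟧)) :
    A.eval 1 = (d.factorial : F) * p.coeff d := by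
  have factorial_ne_zero : (d.factorial : F) ≠ 0 := Nat.cast_ne_zero.mpr d.factorial_ne_zero
  rw [eq_hilbertPoly_of_one_sub_X_pow_mul_mk_eval_eq h, coeff_hilbertPoly_succ_self,
    mul_div_cancel₀ _ factorial_ne_zero]

end HilbertPoly

section HoggattPoly

open Polynomial

/-- The polynomial of degree `r * s` interpolating `k ↦ ⟨k + s choose s⟩_r`. Its `j`-th factor is
`C(X + s + j, s) / C(s + j, s)`, where `preHilbertPoly ℚ s 0` is `C(X + s, s)` and `taylor j`
substitutes `X + j` for `X`. -/
noncomputable def hoggattPoly (r s : ℕ) : ℚ[X] :=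
  ∏ j ∈ Finset.range r, C ((s + j).choose s : ℚ)⁻¹ * taylor (j : ℚ) (preHilbertPoly ℚ s 0)

lemma eval_natCast_hoggattPoly (r s k : ℕ) :
    (hoggattPoly r s).eval (k : ℚ) = hoggatt r (k + s) s := by
  rw [hoggattPoly, hoggatt, eval_prod]
  refine Finset.prod_congr rfl fun j _ ↦ ?_
  rw [eval_mul, eval_C, taylor_eval, ← Nat.cast_add,
    preHilbertPoly_eq_choose_sub_add ℚ s (Nat.zero_le _), Nat.sub_zero, Nat.add_right_comm k j s,
    mul_comm, div_eq_mul_inv]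

lemma coeff_hoggattPoly_top (r s : ℕ) :
    (hoggattPoly r s).coeff (r * s) =
      ∏ j ∈ Finset.range r, (j.factorial : ℚ) / ((s + j).factorial : ℚ) := by
  have natDegree_factor_le : ∀ j ∈ Finset.range r,
      (C ((s + j).choose s : ℚ)⁻¹ * taylor (j : ℚ) (preHilbertPoly ℚ s 0)).natDegree ≤ s :=
    fun j _ ↦ (natDegree_C_mul_le _ _).trans_eq <| by
      rw [natDegree_taylor, natDegree_preHilbertPoly]
  have coeff_prod := coeff_prod_of_natDegree_le _ _ s natDegree_factor_le
  rw [Finset.card_range] at coeff_prod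
  rw [hoggattPoly, coeff_prod]
  refine Finset.prod_congr rfl fun j _ ↦ ?_
  rw [coeff_C_mul, coeff_taylor_preHilbertPoly_self, Nat.cast_add_choose]
  field_simp

end HoggattPoly

/-- For `r, s ≥ 1`, if `A` is the polynomial over `ℚ` with
`(1-x)^{rs+1} ∑_{k≥0} ⟨k+s choose s⟩_r x^k = A(x)` as formal power series, then
`A(1)` equals the `r`-dimensional Catalan number `C_{r,s} = (rs)! ∏_{j=0}^{r-1} j!/(s+j)!`. -/
theorem narayana_poly_eval_one_eq_catalan (r s : ℕ) (hr : 1 ≤ r) (hs : 1 ≤ s)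
    (A : Polynomial ℚ)
    (hA : (1 - PowerSeries.X) ^ (r * s + 1) *
        PowerSeries.mk (fun k => hoggatt r (k + s) s) = (A : PowerSeries ℚ)) :
    A.eval 1 = ((r * s).factorial : ℚ) *
      ∏ j ∈ Finset.range r, (j.factorial : ℚ) / ((s + j).factorial : ℚ) := by
  simp only [← eval_natCast_hoggattPoly] at hA
  rw [eval_one_eq_factorial_mul_coeff_of_one_sub_X_pow_mul_mk_eval_eq hA, coeff_hoggattPoly_top]
end

section
/- Let R be a commutative ring, let a : ℕ → R be a sequence, and for integers k ≥ 0, n ≥ 0 let H(k, n) = det((a(k+i+j))_{i,j=0}^{n-1}) denote the n×n Hankel determinant of the shifted sequence (with H(k, 0) = 1). Then for every r ≥ 2 and every k ≥ 0, H(k, r)·H(k+2, r-2) - H(k+2, r-1)·H(k, r-1) + H(k+1, r-1)^2 = 0. -/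
/-!
Deleting the first or last row and the first or last column of a Hankel matrix leaves a Hankel
matrix, so the claim is the Desnanot–Jacobi identity. That identity is the `2 × 2` case of Jacobi's
formula for minors of the adjugate: replacing the right block column of `adjugate M` by that of the
identity and multiplying by `M` on the left gives a block triangular matrix with diagonal blocks
`det M • 1` and the lower right block of `M`. Comparing determinants gives the formula multiplied by
`det M`, which can be cancelled for the generic matrix over `ℤ`.
-/

open Matrix

section Jacobi

variable {m n R : Type*} [Fintype m] [Fintype n] [DecidableEq m] [DecidableEq n] [CommRing R]

theorem mul_fromBlocks_adjugate (M : Matrix (m ⊕ n) (m ⊕ n) R) :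
    M * fromBlocks M.adjugate.toBlocks₁₁ 0 M.adjugate.toBlocks₂₁ 1 =
      fromBlocks (M.det • 1) M.toBlocks₁₂ 0 M.toBlocks₂₂ := by
  have h : fromBlocks M.toBlocks₁₁ M.toBlocks₁₂ M.toBlocks₂₁ M.toBlocks₂₂ *
      fromBlocks M.adjugate.toBlocks₁₁ M.adjugate.toBlocks₁₂ M.adjugate.toBlocks₂₁
        M.adjugate.toBlocks₂₂ = fromBlocks (M.det • 1) 0 0 (M.det • 1) := by
    rw [fromBlocks_toBlocks, fromBlocks_toBlocks, mul_adjugate, ← fromBlocks_one, fromBlocks_smul,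
      smul_zero, smul_zero]
  rw [fromBlocks_multiply, fromBlocks_inj] at h
  obtain ⟨h₁₁, -, h₂₁, -⟩ := h
  calc
    _ = fromBlocks M.toBlocks₁₁ M.toBlocks₁₂ M.toBlocks₂₁ M.toBlocks₂₂ *
          fromBlocks M.adjugate.toBlocks₁₁ 0 M.adjugate.toBlocks₂₁ 1 := by rw [fromBlocks_toBlocks]
    _ = _ := by simp [fromBlocks_multiply, h₁₁, h₂₁]

theorem det_mul_det_toBlocks₁₁_adjugate (M : Matrix (m ⊕ n) (m ⊕ n) R) :
    M.det * M.adjugate.toBlocks₁₁.det = M.det ^ Fintype.card m * M.toBlocks₂₂.det := by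
  simpa only [det_mul, det_fromBlocks_zero₁₂, det_fromBlocks_zero₂₁, det_smul, det_one, mul_one]
    using congrArg det (mul_fromBlocks_adjugate M)

theorem det_toBlocks₁₁_adjugate [Nonempty m] (M : Matrix (m ⊕ n) (m ⊕ n) R) :
    M.adjugate.toBlocks₁₁.det = M.det ^ (Fintype.card m - 1) * M.toBlocks₂₂.det := by
  let X := mvPolynomialX (m ⊕ n) (m ⊕ n) ℤ
  have generic : X.adjugate.toBlocks₁₁.det =
      X.det ^ (Fintype.card m - 1) * X.toBlocks₂₂.det := by
    apply mul_left_cancel₀ (show X.det ≠ 0 from det_mvPolynomialX_ne_zero _ ℤ)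
    rw [det_mul_det_toBlocks₁₁_adjugate, ← mul_assoc, mul_pow_sub_one Fintype.card_ne_zero]
  let f := MvPolynomial.aeval (R := ℤ) fun p : (m ⊕ n) × (m ⊕ n) => M p.1 p.2
  have hX : f.mapMatrix X = M := mvPolynomialX_mapMatrix_aeval ℤ M
  have h := congrArg f generic
  rw [map_mul, map_pow, AlgHom.map_det, AlgHom.map_det, AlgHom.map_det] at h
  change (f.mapMatrix X.adjugate).toBlocks₁₁.det = _ * (f.mapMatrix X).toBlocks₂₂.det at h
  rwa [AlgHom.map_adjugate, hX] at h

end Jacobi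

theorem bijective_sumElim_endpoints_interior (n : ℕ) :
    Function.Bijective (Sum.elim ![0, Fin.last (n + 1)] fun i : Fin n => i.castSucc.succ) := by
  refine (Fintype.bijective_iff_surjective_and_card _).2 ⟨fun i => ?_, ?card⟩
  case card => rw [Fintype.card_sum, Fintype.card_fin, Fintype.card_fin, Fintype.card_fin, add_comm]
  cases i using Fin.cases with
  | zero => exact ⟨.inl 0, rfl⟩
  | succ i =>
    cases i using Fin.lastCases with
    | last => exact ⟨.inl 1, rfl⟩
    | cast i => exact ⟨.inr i, rfl⟩

theorem desnanot_jacobi {R : Type*} [CommRing R] {n : ℕ}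
    (M : Matrix (Fin (n + 2)) (Fin (n + 2)) R) :
    M.det * ((M.submatrix Fin.succ Fin.succ).submatrix Fin.castSucc Fin.castSucc).det =
      (M.submatrix Fin.succ Fin.succ).det * (M.submatrix Fin.castSucc Fin.castSucc).det -
        (M.submatrix Fin.succ Fin.castSucc).det * (M.submatrix Fin.castSucc Fin.succ).det := by
  let e : Fin 2 ⊕ Fin n ≃ Fin (n + 2) :=
    .ofBijective _ (bijective_sumElim_endpoints_interior n)
  have jacobi : M.adjugate 0 0 * M.adjugate (Fin.last _) (Fin.last _) -
      M.adjugate 0 (Fin.last _) * M.adjugate (Fin.last _) 0 =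
        M.det * ((M.submatrix Fin.succ Fin.succ).submatrix Fin.castSucc Fin.castSucc).det := by
    have h := det_toBlocks₁₁_adjugate (M.submatrix e e)
    rwa [adjugate_submatrix_equiv_self, det_submatrix_equiv_self, Fintype.card_fin, pow_one,
      det_fin_two] at h
  have first_first : M.adjugate 0 0 = (M.submatrix Fin.succ Fin.succ).det := by
    simp [adjugate_fin_succ_eq_det_submatrix]
  have last_last : M.adjugate (Fin.last _) (Fin.last _) =
      (M.submatrix Fin.castSucc Fin.castSucc).det := by
    simp [adjugate_fin_succ_eq_det_submatrix]
  have first_last : M.adjugate 0 (Fin.last _) =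
      (-1) ^ (n + 1) * (M.submatrix Fin.castSucc Fin.succ).det := by
    simp [adjugate_fin_succ_eq_det_submatrix]
  have last_first : M.adjugate (Fin.last _) 0 =
      (-1) ^ (n + 1) * (M.submatrix Fin.succ Fin.castSucc).det := by
    simp [adjugate_fin_succ_eq_det_submatrix]
  have sign_sq : (-1 : R) ^ (n + 1) * (-1) ^ (n + 1) = 1 := by simp [← mul_pow]
  rw [← jacobi, first_first, last_last, first_last, last_first, mul_mul_mul_comm, sign_sq, one_mul,
    mul_comm (M.submatrix Fin.castSucc Fin.succ).det]

/-- The `n × n` Hankel matrix of the sequence `a` shifted by `k`, so that `H(k, n)` is its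
determinant. -/
def hankelMatrix {R : Type*} (a : ℕ → R) (k n : ℕ) : Matrix (Fin n) (Fin n) R :=
  of fun i j => a (k + i + j)

section Hankel

variable {R : Type*} (a : ℕ → R) (k n : ℕ)

theorem hankelMatrix_submatrix_castSucc_castSucc :
    (hankelMatrix a k (n + 1)).submatrix Fin.castSucc Fin.castSucc = hankelMatrix a k n :=
  rfl

theorem hankelMatrix_submatrix_succ_castSucc :
    (hankelMatrix a k (n + 1)).submatrix Fin.succ Fin.castSucc = hankelMatrix a (k + 1) n := by
  ext i j
  simp [hankelMatrix, add_assoc, add_left_comm]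

theorem hankelMatrix_submatrix_castSucc_succ :
    (hankelMatrix a k (n + 1)).submatrix Fin.castSucc Fin.succ = hankelMatrix a (k + 1) n := by
  ext i j
  simp [hankelMatrix, add_left_comm, add_comm]

theorem hankelMatrix_submatrix_succ_succ :
    (hankelMatrix a k (n + 1)).submatrix Fin.succ Fin.succ = hankelMatrix a (k + 2) n := by
  ext i j
  simp [hankelMatrix, add_left_comm, add_comm]

end Hankel

/-- Dodgson condensation for Hankel determinants: if `H k n` denotes the `n × n` Hankel
determinant `det((a(k+i+j))_{i,j=0}^{n-1})` of a sequence `a` in a commutative ring, then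
`H(k,r)·H(k+2,r-2) - H(k+2,r-1)·H(k,r-1) + H(k+1,r-1)² = 0` for all `r ≥ 2` and `k ≥ 0`. -/
theorem hankel_det_condensation {R : Type*} [CommRing R] (a : ℕ → R)
    (H : ℕ → ℕ → R)
    (hH : ∀ k n, H k n = (Matrix.of fun i j : Fin n => a (k + i.1 + j.1)).det)
    (r : ℕ) (hr : 2 ≤ r) (k : ℕ) :
    H k r * H (k + 2) (r - 2) - H (k + 2) (r - 1) * H k (r - 1) +
      H (k + 1) (r - 1) ^ 2 = 0 := by
  obtain ⟨n, rfl⟩ := Nat.exists_eq_add_of_le' hr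
  have hH' (k n) : H k n = (hankelMatrix a k n).det := hH k n
  have condensation := desnanot_jacobi (hankelMatrix a k (n + 2))
  rw [hankelMatrix_submatrix_succ_succ, hankelMatrix_submatrix_castSucc_castSucc,
    hankelMatrix_submatrix_castSucc_castSucc, hankelMatrix_submatrix_succ_castSucc,
    hankelMatrix_submatrix_castSucc_succ] at condensation
  simp only [hH', Nat.add_sub_cancel, Nat.add_succ_sub_one]
  linear_combination condensation
end

section
/- For all integers r ≥ 2, s ≥ 0 and k ≥ 0, the r-Hoggatt binomials satisfy the quadratic recurrence ⟨k choose s⟩_r · ⟨k+2 choose s+2⟩_{r-2} + ⟨k+2 choose s+1⟩_{r-1} · ⟨k choose s+1⟩_{r-1} = (⟨k+1 choose s+1⟩_{r-1})^2. -/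
/-!
For `k ≤ n` the Hoggatt binomial `⟨n choose k⟩_r` is MacMahon's product `M(r, k, n - k)`, where
`M(a, b, c)` counts the plane partitions in an `a × b × c` box and is a quotient of products of the
numbers `F(n) = ∏_{i < n} i!`. Since `F(n + 1) F(n - 1) / F(n)² = n`, all but a few factors cancel
in `M(a + 1, b - 1, c) M(a - 1, b + 1, c) / M(a, b, c)² = a b / ((a + c) (b + c))` and
`M(a, b, c + 1) M(a, b, c - 1) / M(a, b, c)² = c (a + b + c) / ((a + c) (b + c))`,
and the recurrence becomes `a b + c (a + b + c) = (a + c) (b + c)`.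
-/

/-- The product `0! 1! ⋯ (n - 1)!`. It is the superfactorial `sf (n - 1)` for `n > 0`; the shift
makes it the empty product at `n = 0`, so that `macMahonBox` is also right for degenerate boxes. -/
def factorialProd (n : ℕ) : ℕ :=
  ∏ i ∈ Finset.range n, i.factorial

theorem factorialProd_zero : factorialProd 0 = 1 :=
  Finset.prod_range_zero _

theorem factorialProd_succ (n : ℕ) : factorialProd (n + 1) = factorialProd n * n.factorial :=
  Finset.prod_range_succ _ _

theorem factorialProd_ne_zero (n : ℕ) : factorialProd n ≠ 0 :=
  Finset.prod_ne_zero_iff.mpr fun i _ => i.factorial_ne_zero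

theorem factorialProd_add_two_mul (n : ℕ) :
    factorialProd (n + 2) * factorialProd n = (n + 1) * factorialProd (n + 1) ^ 2 := by
  rw [factorialProd_succ (n + 1), factorialProd_succ n, Nat.factorial_succ]
  ring

theorem cast_factorialProd_add_two (n : ℕ) :
    (factorialProd (n + 2) : ℚ) = (n + 1) * factorialProd (n + 1) ^ 2 / factorialProd n := by
  rw [eq_div_iff (Nat.cast_ne_zero.mpr (factorialProd_ne_zero n))]
  exact_mod_cast factorialProd_add_two_mul n

/-- MacMahon's product formula for the number of plane partitions in an `a × b × c` box, written
with `factorialProd` and valued in `ℚ` so that no divisibility is needed. -/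
def macMahonBox (a b c : ℕ) : ℚ :=
  factorialProd a * factorialProd b * factorialProd c * factorialProd (a + b + c) /
    (factorialProd (a + b) * factorialProd (b + c) * factorialProd (a + c))

theorem macMahonBox_zero_left (b c : ℕ) : macMahonBox 0 b c = 1 := by
  simp only [macMahonBox, factorialProd_zero, zero_add, Nat.cast_one]
  field_simp [factorialProd_ne_zero]

theorem macMahonBox_succ_left (a b c : ℕ) :
    macMahonBox (a + 1) b c =
      macMahonBox a b c * ((b + c + a).choose b / (b + a).choose b) := by
  have choose_numerator : ((b + c + a).choose b : ℚ) =
      (a + b + c).factorial / (b.factorial * (a + c).factorial) := by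
    rw [show b + c + a = b + (a + c) by ring, Nat.cast_add_choose,
      show b + (a + c) = a + b + c by ring]
  have choose_denominator : ((b + a).choose b : ℚ) =
      (a + b).factorial / (b.factorial * a.factorial) := by
    rw [Nat.cast_add_choose, add_comm b a]
  rw [choose_numerator, choose_denominator, macMahonBox, macMahonBox,
    show a + 1 + b + c = a + b + c + 1 by ring, add_right_comm a 1 b, add_right_comm a 1 c]
  simp only [factorialProd_succ, Nat.cast_mul]
  field_simp [factorialProd_ne_zero]

theorem macMahonBox_add_two_left_mul (a b c : ℕ) :
    macMahonBox (a + 2) b c * macMahonBox a (b + 2) c =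
      (a + 1) * (b + 1) / ((a + c + 1) * (b + c + 1)) * macMahonBox (a + 1) (b + 1) c ^ 2 := by
  simp only [macMahonBox, ← add_assoc, add_right_comm _ 1, cast_factorialProd_add_two]
  push_cast
  field_simp [factorialProd_ne_zero]

theorem macMahonBox_add_two_right_mul (a b c : ℕ) :
    macMahonBox a b (c + 2) * macMahonBox a b c =
      (c + 1) * (a + b + c + 1) / ((a + c + 1) * (b + c + 1)) * macMahonBox a b (c + 1) ^ 2 := by
  simp only [macMahonBox, ← add_assoc, cast_factorialProd_add_two]
  push_cast
  field_simp [factorialProd_ne_zero]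

theorem macMahonBox_quadratic_recurrence (a b c : ℕ) :
    macMahonBox (a + 2) b (c + 1) * macMahonBox a (b + 2) (c + 1) +
        macMahonBox (a + 1) (b + 1) (c + 2) * macMahonBox (a + 1) (b + 1) c =
      macMahonBox (a + 1) (b + 1) (c + 1) ^ 2 := by
  rw [macMahonBox_add_two_left_mul, macMahonBox_add_two_right_mul]
  push_cast
  field_simp
  ring

theorem hoggatt_succ (r n k : ℕ) :
    hoggatt (r + 1) n k = hoggatt r n k * ((n + r).choose k / (k + r).choose k) :=
  Finset.prod_range_succ _ _

theorem hoggatt_add_eq_macMahonBox (r k d : ℕ) : hoggatt r (k + d) k = macMahonBox r k d := by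
  induction r with
  | zero => exact (macMahonBox_zero_left k d).symm
  | succ r ih => rw [hoggatt_succ, ih, macMahonBox_succ_left]

theorem hoggatt_self (r n : ℕ) : hoggatt r n n = 1 :=
  Finset.prod_eq_one fun j _ =>
    div_self (Nat.cast_ne_zero.mpr (Nat.choose_pos (Nat.le_add_right n j)).ne')

theorem hoggatt_succ_eq_zero_of_lt (r : ℕ) {n k : ℕ} (h : n < k) : hoggatt (r + 1) n k = 0 :=
  Finset.prod_eq_zero (Finset.mem_range.mpr r.succ_pos) <| by
    rw [add_zero, Nat.choose_eq_zero_of_lt h, Nat.cast_zero, zero_div]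

/-- For `r ≥ 2` and `s, k ≥ 0`, the `r`-Hoggatt binomials satisfy the quadratic recurrence
`⟨k choose s⟩_r · ⟨k+2 choose s+2⟩_{r-2} + ⟨k+2 choose s+1⟩_{r-1} · ⟨k choose s+1⟩_{r-1}
  = ⟨k+1 choose s+1⟩_{r-1}²`. -/
theorem hoggatt_quadratic_recurrence (r s k : ℕ) (hr : 2 ≤ r) :
    hoggatt r k s * hoggatt (r - 2) (k + 2) (s + 2) +
      hoggatt (r - 1) (k + 2) (s + 1) * hoggatt (r - 1) k (s + 1) =
    (hoggatt (r - 1) (k + 1) (s + 1)) ^ 2 := by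
  obtain ⟨m, rfl⟩ := Nat.exists_eq_add_of_le' hr
  rw [Nat.add_sub_cancel, show m + 2 - 1 = m + 1 from rfl]
  rcases lt_trichotomy k s with hlt | rfl | hgt
  · rw [hoggatt_succ_eq_zero_of_lt _ hlt, hoggatt_succ_eq_zero_of_lt m (Nat.lt_succ_of_lt hlt),
      hoggatt_succ_eq_zero_of_lt m (Nat.succ_lt_succ hlt)]
    ring
  · rw [hoggatt_succ_eq_zero_of_lt m k.lt_succ_self, hoggatt_self, hoggatt_self, hoggatt_self]
    ring
  · obtain ⟨c, rfl⟩ := Nat.exists_eq_add_of_lt hgt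
    simpa only [← hoggatt_add_eq_macMahonBox, ← add_assoc, add_right_comm _ _ c,
      add_right_comm _ 2 1] using macMahonBox_quadratic_recurrence m s c
end

section
/- For all integers r ≥ 2, s ≥ 0 and k ≥ 0, one has the identity in ℚ: ⟨k choose s⟩_r · ⟨k+2 choose s+2⟩_{r-2} · (k+1) · (k+r-s-1) = (⟨k+1 choose s+1⟩_{r-1})^2 · (r-1) · (s+1), where k+r-s-1 is interpreted as an integer (possibly negative). -/
/-!
Comparing factors turns `⟨n+1 choose k+1⟩_r` into `⟨n choose k⟩_r` times a ratio of binomial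
coefficients, so that `⟨n choose k⟩_{r+1} : ⟨n+1 choose k+1⟩_r = C(n+r,k) : C(n+r,r)`.
The ratios `⟨k choose s⟩_r : ⟨k+1 choose s+1⟩_{r-1}` and
`⟨k+1 choose s+1⟩_{r-1} : ⟨k+2 choose s+2⟩_{r-2}` thus live in the same row `N = k+r-1` of Pascal's
triangle, and their quotient involves only the neighbouring entries `C(N,s) : C(N,s+1)` and
`C(N,r-2) : C(N,r-1)`.
-/

theorem cast_choose_succ_right_eq {R : Type*} [Ring R] (n k : ℕ) :
    (n.choose (k + 1) : R) * (k + 1) = n.choose k * (n - k) := by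
  rcases le_or_gt k n with hkn | hnk
  · rw [← Nat.cast_sub hkn]
    exact_mod_cast congrArg (Nat.cast (R := R)) (Nat.choose_succ_right_eq n k)
  · simp [Nat.choose_eq_zero_of_lt hnk, Nat.choose_eq_zero_of_lt (hnk.trans k.lt_succ_self)]

theorem cast_choose_succ_succ_eq {K : Type*} [DivisionRing K] [CharZero K] (n k : ℕ) :
    ((n + 1).choose (k + 1) : K) = (n + 1) * n.choose k / (k + 1) := by
  rw [eq_div_iff (Nat.cast_add_one_ne_zero k)]
  exact_mod_cast (Nat.add_one_mul_choose_eq n k).symm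

theorem cast_choose_succ_succ_div_choose_succ_succ {K : Type*} [Field K] [CharZero K] (n m k : ℕ) :
    ((n + 1).choose (k + 1) : K) / (m + 1).choose (k + 1) =
      n.choose k / m.choose k * ((n + 1) / (m + 1)) := by
  have hk : (k : K) + 1 ≠ 0 := Nat.cast_add_one_ne_zero k
  rw [cast_choose_succ_succ_eq, cast_choose_succ_succ_eq, div_div_div_cancel_right₀ hk,
    mul_div_mul_comm, mul_comm]

theorem hoggatt_succ_succ_mul_choose (r n k : ℕ) :
    hoggatt r (n + 1) (k + 1) * (k + r).choose r = hoggatt r n k * (n + r).choose r := by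
  induction r with
  | zero => simp [hoggatt]
  | succ r ih =>
    have hkr : ((k + r : ℕ) : ℚ) + 1 ≠ 0 := Nat.cast_add_one_ne_zero _
    have factor_shift := cast_choose_succ_succ_div_choose_succ_succ (K := ℚ) (n + r) (k + r) k
    rw [hoggatt_succ, hoggatt_succ, ← add_assoc, ← add_assoc, add_right_comm n 1 r,
      add_right_comm k 1 r, factor_shift, cast_choose_succ_succ_eq, cast_choose_succ_succ_eq]
    set q : ℚ := (n + r).choose k / (k + r).choose k
    calc
      hoggatt r (n + 1) (k + 1) * (q * (((n + r : ℕ) + 1) / ((k + r : ℕ) + 1))) *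
            (((k + r : ℕ) + 1) * (k + r).choose r / (r + 1))
        = hoggatt r (n + 1) (k + 1) * (k + r).choose r * q * (((n + r : ℕ) + 1) / (r + 1)) := by
          field_simp
      _ = hoggatt r n k * (n + r).choose r * q * (((n + r : ℕ) + 1) / (r + 1)) := by rw [ih]
      _ = hoggatt r n k * q * (((n + r : ℕ) + 1) * (n + r).choose r / (r + 1)) := by ring

theorem hoggatt_succ_mul_choose (r n k : ℕ) :
    hoggatt (r + 1) n k * (n + r).choose r = hoggatt r (n + 1) (k + 1) * (n + r).choose k := by
  have choose_ne_zero : ((k + r).choose k : ℚ) ≠ 0 :=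
    Nat.cast_ne_zero.mpr (Nat.choose_ne_zero (Nat.le_add_right k r))
  calc
    hoggatt (r + 1) n k * (n + r).choose r
      = hoggatt r n k * (n + r).choose r * ((n + r).choose k / (k + r).choose k) := by
        rw [hoggatt_succ, mul_right_comm]
    _ = hoggatt r (n + 1) (k + 1) * (k + r).choose k *
          ((n + r).choose k / (k + r).choose k) := by
        rw [← hoggatt_succ_succ_mul_choose, Nat.choose_symm_add]
    _ = hoggatt r (n + 1) (k + 1) * (n + r).choose k := by
        rw [mul_assoc, mul_div_cancel₀ _ choose_ne_zero]

/-- For `r ≥ 2` and `s, k ≥ 0`, the identity in `ℚ`: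
`⟨k choose s⟩_r · ⟨k+2 choose s+2⟩_{r-2} · (k+1) · (k+r-s-1)
  = ⟨k+1 choose s+1⟩_{r-1}² · (r-1) · (s+1)`. -/
theorem hoggatt_quadratic_ratio_identity (r s k : ℕ) (hr : 2 ≤ r) :
    hoggatt r k s * hoggatt (r - 2) (k + 2) (s + 2) *
        ((k : ℚ) + 1) * ((k : ℚ) + r - s - 1) =
    (hoggatt (r - 1) (k + 1) (s + 1)) ^ 2 * ((r : ℚ) - 1) * ((s : ℚ) + 1) := by
  obtain ⟨m, rfl⟩ := Nat.exists_eq_add_of_le' hr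
  rw [show m + 2 - 2 = m by omega, show m + 2 - 1 = m + 1 by omega]
  have outer_ratio := hoggatt_succ_mul_choose (m + 1) k s
  have inner_ratio := hoggatt_succ_mul_choose m (k + 1) (s + 1)
  rw [add_assoc k 1 m, add_comm 1 m] at inner_ratio
  set H₀ := hoggatt (m + 2) k s
  set H₁ := hoggatt (m + 1) (k + 1) (s + 1)
  set H₂ := hoggatt m (k + 2) (s + 2)
  obtain ⟨N, hN⟩ : ∃ N, N = k + (m + 1) := ⟨_, rfl⟩
  have cast_N : (N : ℚ) = k + (m + 1) := by exact_mod_cast hN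
  have choose_ne_zero : (N.choose (m + 1) : ℚ) ≠ 0 :=
    Nat.cast_ne_zero.mpr (Nat.choose_ne_zero (hN ▸ Nat.le_add_left (m + 1) k))
  rw [← hN] at outer_ratio inner_ratio
  apply mul_right_cancel₀ choose_ne_zero
  calc
    H₀ * H₂ * (k + 1) * (k + (m + 2 : ℕ) - s - 1) * N.choose (m + 1)
      = H₀ * N.choose (m + 1) * H₂ * (k + 1) * (N - s) := by rw [cast_N]; push_cast; ring
    _ = H₁ * H₂ * (k + 1) * (N.choose s * (N - s)) := by rw [outer_ratio]; ring
    _ = H₁ * (H₂ * N.choose (s + 1)) * (k + 1) * (s + 1) := by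
      rw [← cast_choose_succ_right_eq]; ring
    _ = H₁ ^ 2 * (N.choose m * (N - m)) * (s + 1) := by rw [← inner_ratio, cast_N]; ring
    _ = H₁ ^ 2 * ((m + 2 : ℕ) - 1) * (s + 1) * N.choose (m + 1) := by
      rw [← cast_choose_succ_right_eq]; push_cast; ring
end

section
/- For all integers r ≥ 1 and 0 ≤ k ≤ n, one has ⟨n choose k⟩_r = ∏_{j=0}^{r-1} (n+1-k+j)^{(k+r-1-2j)} / (1+j)^{(k+r-1-2j)}, where for an integer t and a rational x the generalized rising factorial is x^{(t)} = x(x+1)···(x+t-1) if t > 0, x^{(0)} = 1, and x^{(t)} = 1/((x-1)(x-2)···(x+t)) if t < 0 (all factors occurring in the denominators here are nonzero). -/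
/-- The generalized rising factorial `x^{(t)}` of a rational `x` with integer exponent `t`:
`x^{(t)} = x(x+1)⋯(x+t-1)` for `t > 0`, `x^{(0)} = 1`, and
`x^{(t)} = 1/((x-1)(x-2)⋯(x+t))` for `t < 0`. -/
def genRisingFactorial (x : ℚ) (t : ℤ) : ℚ :=
  if 0 ≤ t then ∏ i ∈ Finset.range t.toNat, (x + i)
  else (∏ i ∈ Finset.range (-t).toNat, (x - 1 - i))⁻¹

/-!
For natural `p` and `q`, whichever is larger, `(p+1)^{(q-p)} = q!/p!`. Hence
`(a+1+j)^{(k+r-1-2j)} = (a+k+(r-1-j))!/(a+j)!`, and reversing the order of the numerators in the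
product over `j < r` turns it into `∏ (a+k+j)!/(a+j)! = ∏ (a+1+j)^{(k)}`, in which all the
exponents are equal. For `a = n - k` and `a = 0` these are the products of the
`k! * C(n+j, k)` and of the `k! * C(k+j, k)`.
-/

open Finset
open scoped Nat

theorem genRisingFactorial_natCast (x : ℚ) (d : ℕ) :
    genRisingFactorial x d = ∏ i ∈ range d, (x + i) := by
  simp [genRisingFactorial]

theorem genRisingFactorial_neg_natCast (x : ℚ) (d : ℕ) :
    genRisingFactorial x (-d) = (∏ i ∈ range d, (x - 1 - i))⁻¹ := by
  rcases d.eq_zero_or_pos with rfl | hd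
  · simp [genRisingFactorial]
  · simp [genRisingFactorial, hd.ne']

theorem cast_succ_ascFactorial_eq_div {K : Type*} [Semifield K] [CharZero K] (p d : ℕ) :
    ((p + 1).ascFactorial d : K) = (p + d)! / p ! := by
  rw [eq_div_iff (Nat.cast_ne_zero.mpr p.factorial_ne_zero), mul_comm]
  exact_mod_cast p.factorial_mul_ascFactorial d

theorem prod_range_natCast_add_sub {K : Type*} [Field K] [CharZero K] (q d : ℕ) :
    ∏ i ∈ range d, (((q + d : ℕ) : K) - i) = (q + d)! / q ! := by
  rw [← descPochhammer_eval_eq_prod_range, descPochhammer_eval_eq_descFactorial,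
    Nat.add_descFactorial_eq_ascFactorial, cast_succ_ascFactorial_eq_div]

theorem genRisingFactorial_natCast_add_one (p q : ℕ) :
    genRisingFactorial (p + 1) (q - p) = q ! / p ! := by
  rcases le_total p q with hpq | hqp
  · obtain ⟨d, rfl⟩ := Nat.exists_eq_add_of_le hpq
    rw [show ((p + d : ℕ) : ℤ) - p = d by simp, genRisingFactorial_natCast,
      ← cast_succ_ascFactorial_eq_div, Nat.ascFactorial_eq_prod_range]
    simp only [Nat.cast_prod, Nat.cast_add, Nat.cast_one]
  · obtain ⟨d, rfl⟩ := Nat.exists_eq_add_of_le hqp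
    rw [show (q : ℤ) - (q + d : ℕ) = -d by simp, genRisingFactorial_neg_natCast,
      add_sub_cancel_right, prod_range_natCast_add_sub, inv_div]

theorem prod_genRisingFactorial_eq_prod_ascFactorial (r a k : ℕ) :
    ∏ j ∈ range r, genRisingFactorial ((a : ℚ) + 1 + j) ((k : ℤ) + r - 1 - 2 * j) =
      ∏ j ∈ range r, ((a + j + 1).ascFactorial k : ℚ) := by
  have factorial_form : ∀ j ∈ range r,
      genRisingFactorial ((a : ℚ) + 1 + j) ((k : ℤ) + r - 1 - 2 * j) =
        ((a + (r - 1 - j) + k)! : ℚ) / (a + j)! := by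
    intro j hj
    have hjr := mem_range.mp hj
    rw [← genRisingFactorial_natCast_add_one]
    congr 1
    · push_cast
      ring
    · omega
  calc _ = ∏ j ∈ range r, ((a + (r - 1 - j) + k)! : ℚ) / (a + j)! :=
        prod_congr rfl factorial_form
    _ = ∏ j ∈ range r, ((a + j + k)! : ℚ) / (a + j)! := by
        simp only [prod_div_distrib]
        rw [prod_range_reflect fun j ↦ ((a + j + k)! : ℚ)]
    _ = _ := by simp only [cast_succ_ascFactorial_eq_div]

theorem hoggatt_add_eq_prod_ascFactorial_div (r a k : ℕ) :
    hoggatt r (a + k) k =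
      ∏ j ∈ range r, ((a + j + 1).ascFactorial k : ℚ) / ((j + 1).ascFactorial k : ℚ) := by
  refine prod_congr rfl fun j _ ↦ ?_
  rw [Nat.ascFactorial_eq_factorial_mul_choose, Nat.ascFactorial_eq_factorial_mul_choose,
    add_right_comm a k j, add_comm k j]
  push_cast
  rw [mul_div_mul_left _ _ (by positivity)]

/-- For `r ≥ 1` and `0 ≤ k ≤ n`, one has
`⟨n choose k⟩_r = ∏_{j=0}^{r-1} (n+1-k+j)^{(k+r-1-2j)} / (1+j)^{(k+r-1-2j)}`
where the exponents `k+r-1-2j` are integers, possibly negative. -/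
theorem hoggatt_genRisingFactorial_representation (r n k : ℕ) (hr : 1 ≤ r) (hk : k ≤ n) :
    hoggatt r n k =
      ∏ j ∈ Finset.range r,
        genRisingFactorial ((n : ℚ) + 1 - k + j) ((k : ℤ) + r - 1 - 2 * j) /
          genRisingFactorial (1 + (j : ℚ)) ((k : ℤ) + r - 1 - 2 * j) := by
  obtain ⟨a, rfl⟩ := Nat.exists_eq_add_of_le' hk
  have base_eq : ((a + k : ℕ) : ℚ) + 1 - k = a + 1 := by
    push_cast
    ring
  have denominator_eq := prod_genRisingFactorial_eq_prod_ascFactorial r 0 k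
  simp only [Nat.cast_zero, zero_add] at denominator_eq
  rw [hoggatt_add_eq_prod_ascFactorial_div, base_eq, prod_div_distrib, prod_div_distrib,
    prod_genRisingFactorial_eq_prod_ascFactorial, denominator_eq]
end
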